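/- In the setting of the context, assume a_{ss} ≠ 0, a_{rs} ≠ 0, and d := deg(a_{rs}) − deg(a_{ss}) < 0; let c = LC(a_{rs})·LC(a_{ss})^{−1} and b_{rj} = x^{−d}·a_{rj} − c·a_{sj} for 1 ≤ j ≤ r. Then: (B1) deg_u(b_{rr} e_r) = deg_u(x^{−d} a_{rr} e_r); (B2) deg_u(b_{rs} e_s) < deg_u(x^{−d} a_{rs} e_s); (B3) deg_u(b_{rj} e_j) < deg_u(x^{−d} a_{rs} e_s) for s < j < r; (B4) deg_u(b_{rj} e_j) ≤ deg_u(x^{−d} a_{rs} e_s) for j < s. Moreover, for g = Σ_j b_{rj} e_j, deg_u(LT(g)) − deg_u(b_{rr} e_r) ≤ deg_u(LT(g_r)) − deg_u(a_{rr} e_r), with equality only if ind(LT(g)) < ind(LT(g_r)). -/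

import Mathlib

open scoped Classical

/-- `deg_u(a·e_j) = u_x·deg(a) + u_j` for nonzero `a ∈ k[x]`, and `−∞` (`⊥`) for `a = 0`. -/
noncomputable def degu {k : Type*} [Field k] (ux : ℕ) (u : ℕ → ℕ)
    (a : Polynomial k) (j : ℕ) : WithBot ℕ :=
  if a = 0 then ⊥ else ((ux * a.natDegree + u j : ℕ) : WithBot ℕ)

/-- `deg_u(LT(g))` for `g = Σ_{j=1}^r b_j e_j`: the maximum of `deg_u(b_j e_j)`. -/
noncomputable def degLT {k : Type*} [Field k] (ux : ℕ) (u : ℕ → ℕ) (r : ℕ)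
    (b : ℕ → Polynomial k) : WithBot ℕ :=
  (Finset.Icc 1 r).sup fun j => degu ux u (b j) j

/-- `ind(LT(g))` for `g = Σ_{j=1}^r b_j e_j`: the largest index attaining the maximum. -/
noncomputable def indLT {k : Type*} [Field k] (ux : ℕ) (u : ℕ → ℕ) (r : ℕ)
    (b : ℕ → Polynomial k) : ℕ :=
  (((Finset.Icc 1 r).filter fun j => degu ux u (b j) j = degLT ux u r b).sup id)

/-!
Rows `p = g_r` and `q = g_s` both lead at column `s`, and `b = X ^ e • p - c • q` cancels the
leading terms of `X ^ e * p s` and `c * q s`, whose common weighted degree we call `D`. In every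
column up to `r` the entry of `b` is bounded by `D`, strictly so from column `s` on. In column
`t = r` the permutation condition, applied to the transposition `(s t)`, says that `q t` is too
small to affect `X ^ e * p t`, so that entry keeps its degree. Hence, relative to the entry in
column `t`, the leading degree of `b` does not exceed that of `p`, and if the two agree then the
leading term of `b` lies strictly to the left of column `s`.
-/

lemma add_swap_lt_of_sum_swap_lt {ι M : Type*} [DecidableEq ι] [AddCommMonoid M] [LinearOrder M]
    [IsOrderedAddMonoid M] {S : Finset ι} {w : ι → ι → M} {s t : ι} (hs : s ∈ S) (ht : t ∈ S)
    (hst : s ≠ t) (h : ∑ i ∈ S, w i (Equiv.swap s t i) < ∑ i ∈ S, w i i) :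
    w s t + w t s < w s s + w t t := by
  have hsub : {s, t} ⊆ S := Finset.insert_subset hs (Finset.singleton_subset_iff.2 ht)
  have split (f : ι → M) : ∑ i ∈ S, f i = ∑ i ∈ S \ {s, t}, f i + (f s + f t) := by
    rw [← Finset.sum_pair hst, Finset.sum_sdiff hsub]
  have off_pair : ∑ i ∈ S \ {s, t}, w i (Equiv.swap s t i) = ∑ i ∈ S \ {s, t}, w i i := by
    refine Finset.sum_congr rfl fun i hi => ?_
    simp only [Finset.mem_sdiff, Finset.mem_insert, Finset.mem_singleton, not_or] at hi
    rw [Equiv.swap_apply_of_ne_of_ne hi.2.1 hi.2.2]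
  rw [split, split fun i => w i i, off_pair, Equiv.swap_apply_left, Equiv.swap_apply_right] at h
  exact lt_of_add_lt_add_left h

section WeightedDegree

open Polynomial

variable {k : Type*} [Field k] {ux : ℕ} {u : ℕ → ℕ}

lemma degu_eq_map_degree (p : k[X]) (j : ℕ) :
    degu ux u p j = p.degree.map fun n => ux * n + u j := by
  by_cases hp : p = 0
  · simp [degu, hp]
  · rw [degu, if_neg hp, degree_eq_natDegree hp]
    rfl

lemma degu_eq_bot {p : k[X]} {j : ℕ} : degu ux u p j = ⊥ ↔ p = 0 := by
  rw [degu_eq_map_degree, WithBot.map_eq_bot_iff, degree_eq_bot]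

lemma degu_congr {p q : k[X]} (h : p.degree = q.degree) (j : ℕ) :
    degu ux u p j = degu ux u q j := by
  rw [degu_eq_map_degree, degu_eq_map_degree, h]

lemma degu_le_degu {p q : k[X]} (h : p.degree ≤ q.degree) (j : ℕ) :
    degu ux u p j ≤ degu ux u q j := by
  have hmono : Monotone fun n => ux * n + u j := fun _ _ hn => by dsimp only; gcongr
  simpa only [degu_eq_map_degree] using hmono.withBot_map h

lemma degu_lt_degu (hux : 0 < ux) {p q : k[X]} (h : p.degree < q.degree) (j : ℕ) :
    degu ux u p j < degu ux u q j := by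
  have hmono : StrictMono fun n => ux * n + u j := fun _ _ hn => by dsimp only; gcongr
  simpa only [degu_eq_map_degree] using hmono.withBot_map h

lemma degree_lt_of_degu_lt {p q : k[X]} {j : ℕ} (h : degu ux u p j < degu ux u q j) :
    p.degree < q.degree :=
  lt_of_not_ge fun hle => h.not_ge (degu_le_degu hle j)

lemma degu_X_pow_mul (e : ℕ) (p : k[X]) (j : ℕ) :
    degu ux u (X ^ e * p) j = ((ux * e : ℕ) : WithBot ℕ) + degu ux u p j := by
  by_cases hp : p = 0
  · simp [degu, hp]
  · have hXp : X ^ e * p ≠ 0 := mul_ne_zero (pow_ne_zero e X_ne_zero) hp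
    rw [degu, degu, if_neg hXp, if_neg hp, natDegree_X_pow_mul e hp, ← Nat.cast_add]
    congr 1
    ring

lemma degu_C_mul_le (c : k) (p : k[X]) (j : ℕ) : degu ux u (C c * p) j ≤ degu ux u p j :=
  degu_le_degu (smul_eq_C_mul (p := p) c ▸ degree_smul_le c p) j

lemma degu_sub_le (p q : k[X]) (j : ℕ) :
    degu ux u (p - q) j ≤ max (degu ux u p j) (degu ux u q j) := by
  rcases le_max_iff.1 (degree_sub_le p q) with h | h
  · exact le_max_of_le_left (degu_le_degu h j)
  · exact le_max_of_le_right (degu_le_degu h j)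

lemma degu_sub_eq_left {p q : k[X]} {j : ℕ} (h : degu ux u q j < degu ux u p j) :
    degu ux u (p - q) j = degu ux u p j :=
  degu_congr (degree_sub_eq_left_of_degree_lt (degree_lt_of_degu_lt h)) j

end WeightedDegree

section LeadingIndex

open Polynomial

variable {k : Type*} [Field k] {ux : ℕ} {u : ℕ → ℕ} {r s : ℕ} {g : ℕ → k[X]}

lemma degu_le_degLT {j : ℕ} (h1 : 1 ≤ j) (hr : j ≤ r) :
    degu ux u (g j) j ≤ degLT ux u r g :=
  Finset.le_sup (f := fun j => degu ux u (g j) j) (Finset.mem_Icc.2 ⟨h1, hr⟩)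

lemma degLT_le {D : WithBot ℕ} (h : ∀ j, 1 ≤ j → j ≤ r → degu ux u (g j) j ≤ D) :
    degLT ux u r g ≤ D :=
  Finset.sup_le fun j hj => h j (Finset.mem_Icc.1 hj).1 (Finset.mem_Icc.1 hj).2

lemma le_indLT {j : ℕ} (h1 : 1 ≤ j) (hr : j ≤ r) (h : degu ux u (g j) j = degLT ux u r g) :
    j ≤ indLT ux u r g :=
  Finset.le_sup (f := id) (Finset.mem_filter.2 ⟨Finset.mem_Icc.2 ⟨h1, hr⟩, h⟩)

lemma indLT_lt (hs : 0 < s)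
    (h : ∀ j, s ≤ j → j ≤ r → degu ux u (g j) j < degLT ux u r g) : indLT ux u r g < s := by
  refine (Finset.sup_lt_iff hs).2 fun j hj => lt_of_not_ge fun hsj => ?_
  obtain ⟨hjr, hattained⟩ := Finset.mem_filter.1 hj
  exact (h j hsj (Finset.mem_Icc.1 hjr).2).ne hattained

/-- Column `s` carries the leading term of `g = Σ_{j=1}^r g_j e_j`: it attains the maximal weighted
degree and no larger index does. This is the common form of conditions (E1) and (E2), and it
allows `g = 0` only when `s = r`. -/
structure IsLeadingIndex (ux : ℕ) (u : ℕ → ℕ) (r : ℕ) (g : ℕ → k[X]) (s : ℕ) : Prop where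
  one_le : 1 ≤ s
  le_length : s ≤ r
  degu_le : ∀ j, 1 ≤ j → j ≤ r → degu ux u (g j) j ≤ degu ux u (g s) s
  degu_lt : ∀ j, s < j → j ≤ r → degu ux u (g j) j < degu ux u (g s) s

lemma isLeadingIndex_of_lt_of_le (h1 : 1 ≤ s) (hr : s ≤ r)
    (hlt : ∀ j, s < j → j ≤ r → degu ux u (g j) j < degu ux u (g s) s)
    (hle : ∀ j, 1 ≤ j → j < s → degu ux u (g j) j ≤ degu ux u (g s) s) :
    IsLeadingIndex ux u r g s where
  one_le := h1
  le_length := hr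
  degu_lt := hlt
  degu_le j hj hjr := by
    rcases lt_trichotomy j s with hjs | rfl | hsj
    · exact hle j hj hjs
    · exact le_rfl
    · exact (hlt j hsj hjr).le

namespace IsLeadingIndex

lemma degLT_eq (h : IsLeadingIndex ux u r g s) : degLT ux u r g = degu ux u (g s) s :=
  le_antisymm (degLT_le h.degu_le) (degu_le_degLT h.one_le h.le_length)

lemma le_indLT (h : IsLeadingIndex ux u r g s) : s ≤ indLT ux u r g :=
  _root_.le_indLT h.one_le h.le_length h.degLT_eq.symm

end IsLeadingIndex

end LeadingIndex

section CancelLead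

open Polynomial

/-- The row `X ^ e • p - c • q`, where the scalar `c` is the quotient of the leading coefficients of
`p s` and `q s`. When `(q s).natDegree = e + (p s).natDegree` this cancels the leading terms in
column `s`; with `p = g_r`, `q = g_s` and `e = -d` it is the updated row `(b_{rj})_j`. -/
noncomputable def cancelLead {k : Type*} [Field k] (e s : ℕ) (p q : ℕ → k[X]) (j : ℕ) : k[X] :=
  X ^ e * p j - C ((p s).leadingCoeff * (q s).leadingCoeff⁻¹) * q j

variable {k : Type*} [Field k] {ux : ℕ} {u : ℕ → ℕ} {r s t e : ℕ} {p q : ℕ → k[X]}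

lemma degree_X_pow_mul_eq_of_natDegree_eq {f g : k[X]} (hf : f ≠ 0) (hg : g ≠ 0)
    (h : g.natDegree = e + f.natDegree) : (X ^ e * f).degree = g.degree := by
  have hXf : X ^ e * f ≠ 0 := mul_ne_zero (pow_ne_zero e X_ne_zero) hf
  rw [degree_eq_natDegree hXf, degree_eq_natDegree hg, natDegree_X_pow_mul e hf, h, add_comm]

lemma degree_cancelLead_lt (hp : p s ≠ 0) (hq : q s ≠ 0)
    (he : (q s).natDegree = e + (p s).natDegree) :
    (cancelLead e s p q s).degree < (X ^ e * p s).degree := by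
  have hlp : (p s).leadingCoeff ≠ 0 := leadingCoeff_ne_zero.2 hp
  have hlq : (q s).leadingCoeff ≠ 0 := leadingCoeff_ne_zero.2 hq
  refine degree_sub_lt_left ?_ (mul_ne_zero (pow_ne_zero e X_ne_zero) hp) ?_
  · rw [degree_C_mul (mul_ne_zero hlp (inv_ne_zero hlq)),
      degree_X_pow_mul_eq_of_natDegree_eq hp hq he]
  · rw [leadingCoeff_mul, leadingCoeff_X_pow, one_mul, leadingCoeff_mul, leadingCoeff_C,
      inv_mul_cancel_right₀ hlq]

lemma degu_cancelLead_le {D : WithBot ℕ} {j : ℕ} (hp : degu ux u (X ^ e * p j) j ≤ D)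
    (hq : degu ux u (q j) j ≤ D) : degu ux u (cancelLead e s p q j) j ≤ D :=
  (degu_sub_le _ _ j).trans (max_le hp ((degu_C_mul_le _ _ j).trans hq))

lemma degu_cancelLead_lt {D : WithBot ℕ} {j : ℕ} (hp : degu ux u (X ^ e * p j) j < D)
    (hq : degu ux u (q j) j < D) : degu ux u (cancelLead e s p q j) j < D :=
  (degu_sub_le _ _ j).trans_lt (max_lt hp ((degu_C_mul_le _ _ j).trans_lt hq))

lemma degu_cancelLead_eq (hD : degu ux u (X ^ e * p s) s = degu ux u (q s) s)
    (hswap : degu ux u (q t) t + degu ux u (p s) s < degu ux u (q s) s + degu ux u (p t) t) :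
    degu ux u (cancelLead e s p q t) t = degu ux u (X ^ e * p t) t := by
  have hlt : degu ux u (q t) t < degu ux u (X ^ e * p t) t := by
    rw [← hD, degu_X_pow_mul, add_right_comm, ← degu_X_pow_mul] at hswap
    exact lt_of_add_lt_add_right hswap
  exact degu_sub_eq_left ((degu_C_mul_le _ _ t).trans_lt hlt)

lemma degLT_add_le_and_indLT_lt {b : ℕ → k[X]} (hp : IsLeadingIndex ux u r p s) (hpt : p t ≠ 0)
    (hbt : degu ux u (b t) t = degu ux u (X ^ e * p t) t)
    (hle : ∀ j, 1 ≤ j → j ≤ r → degu ux u (b j) j ≤ degu ux u (X ^ e * p s) s)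
    (hlt : ∀ j, s ≤ j → j ≤ r → degu ux u (b j) j < degu ux u (X ^ e * p s) s) :
    degLT ux u r b + degu ux u (p t) t ≤ degLT ux u r p + degu ux u (b t) t ∧
    (degLT ux u r b + degu ux u (p t) t = degLT ux u r p + degu ux u (b t) t →
      indLT ux u r b < indLT ux u r p) := by
  have hshift : degLT ux u r p + degu ux u (b t) t
      = degu ux u (X ^ e * p s) s + degu ux u (p t) t := by
    rw [hp.degLT_eq, hbt, degu_X_pow_mul, degu_X_pow_mul, add_left_comm, add_assoc]
  rw [hshift]
  refine ⟨by gcongr; exact degLT_le hle, fun heq => ?_⟩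
  have hlead : degLT ux u r b = degu ux u (X ^ e * p s) s :=
    WithBot.add_right_cancel (mt degu_eq_bot.1 hpt) heq
  exact (indLT_lt hp.one_le (hlead ▸ hlt)).trans_le hp.le_indLT

theorem stmt_17_general (hux : 0 < ux) (hp : IsLeadingIndex ux u r p s)
    (hq : IsLeadingIndex ux u r q s) (hps : p s ≠ 0)
    (hswap : degu ux u (q t) t + degu ux u (p s) s < degu ux u (q s) s + degu ux u (p t) t)
    (he : (q s).natDegree = e + (p s).natDegree) :
    degu ux u (cancelLead e s p q t) t = degu ux u (X ^ e * p t) t ∧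
    (∀ j, 1 ≤ j → j ≤ r →
      degu ux u (cancelLead e s p q j) j ≤ degu ux u (X ^ e * p s) s) ∧
    (∀ j, s ≤ j → j ≤ r →
      degu ux u (cancelLead e s p q j) j < degu ux u (X ^ e * p s) s) ∧
    degLT ux u r (cancelLead e s p q) + degu ux u (p t) t ≤
      degLT ux u r p + degu ux u (cancelLead e s p q t) t ∧
    (degLT ux u r (cancelLead e s p q) + degu ux u (p t) t =
        degLT ux u r p + degu ux u (cancelLead e s p q t) t →
      indLT ux u r (cancelLead e s p q) < indLT ux u r p) := by
  obtain ⟨hqs_bot, hpt_bot⟩ := WithBot.add_ne_bot.1 hswap.ne_bot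
  have hqs : q s ≠ 0 := mt degu_eq_bot.2 hqs_bot
  have hpt : p t ≠ 0 := mt degu_eq_bot.2 hpt_bot
  have hD : degu ux u (X ^ e * p s) s = degu ux u (q s) s :=
    degu_congr (degree_X_pow_mul_eq_of_natDegree_eq hps hqs he) s
  have hbt := degu_cancelLead_eq hD hswap
  have hle : ∀ j, 1 ≤ j → j ≤ r →
      degu ux u (cancelLead e s p q j) j ≤ degu ux u (X ^ e * p s) s := by
    refine fun j h1 hr => degu_cancelLead_le ?_ (hD ▸ hq.degu_le j h1 hr)
    rw [degu_X_pow_mul, degu_X_pow_mul]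
    gcongr
    exact hp.degu_le j h1 hr
  have hlt : ∀ j, s ≤ j → j ≤ r →
      degu ux u (cancelLead e s p q j) j < degu ux u (X ^ e * p s) s := by
    intro j hsj hr
    obtain rfl | hsj := hsj.eq_or_lt
    · exact degu_lt_degu hux (degree_cancelLead_lt hps hqs he) s
    · refine degu_cancelLead_lt ?_ (hD ▸ hq.degu_lt j hsj hr)
      rw [degu_X_pow_mul, degu_X_pow_mul]
      exact WithBot.add_lt_add_left WithBot.coe_ne_bot (hp.degu_lt j hsj hr)
  exact ⟨hbt, hle, hlt, degLT_add_le_and_indLT_lt hp hpt hbt hle hlt⟩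

end CancelLead

/-- Proposition 6 (case `d < 0`): the one-step update `g = x^{−d}·g_r − c·g_s` satisfies
(B1)–(B4), and `deg_u(LT(g)) − deg_u(b_{rr} e_r) ≤ deg_u(LT(g_r)) − deg_u(a_{rr} e_r)`
(stated additively), with equality only if `ind(LT(g)) < ind(LT(g_r))`. -/
theorem stmt_17 (k : Type*) [Field k] (m : ℕ) (hm : 1 ≤ m)
    (ux : ℕ) (hux : 0 < ux) (u : ℕ → ℕ) (hupos : ∀ i, 0 < u i)
    (r s : ℕ) (hs : 1 ≤ s) (hsr : s < r) (hrm : r ≤ m)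
    (a : ℕ → ℕ → Polynomial k)
    -- (E1)
    (hE1 : ∀ j, s < j → j ≤ r → degu ux u (a s j) j < degu ux u (a s s) s)
    (hE1' : ∀ j', 1 ≤ j' → j' < s → degu ux u (a s j') j' ≤ degu ux u (a s s) s)
    -- (E2)
    (hE2 : ∀ j, s < j → j ≤ r → degu ux u (a r j) j < degu ux u (a r s) s)
    (hE2' : ∀ j', 1 ≤ j' → j' < s → degu ux u (a r j') j' ≤ degu ux u (a r s) s)
    -- (E3)
    (hE3 : ∀ π : ℕ → ℕ, Set.BijOn π (Set.Icc 1 r) (Set.Icc 1 r) →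
      (∃ i ∈ Set.Icc 1 r, π i ≠ i) →
      ∑ i ∈ Finset.Icc 1 r, degu ux u (a i (π i)) (π i) <
        ∑ i ∈ Finset.Icc 1 r, degu ux u (a i i) i)
    (hass : a s s ≠ 0) (hars : a r s ≠ 0)
    -- `d = deg(a_rs) − deg(a_ss) < 0`; `e = −d`
    (hd : (a r s).natDegree < (a s s).natDegree)
    (e : ℕ) (he : e = (a s s).natDegree - (a r s).natDegree)
    (c : k) (hc : c = (a r s).leadingCoeff * (a s s).leadingCoeff⁻¹)
    (b : ℕ → Polynomial k)
    (hb : ∀ j, b j = Polynomial.X ^ e * a r j - Polynomial.C c * a s j) :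
    -- (B1)
    degu ux u (b r) r = degu ux u (Polynomial.X ^ e * a r r) r ∧
    -- (B2)
    degu ux u (b s) s < degu ux u (Polynomial.X ^ e * a r s) s ∧
    -- (B3)
    (∀ j, s < j → j < r → degu ux u (b j) j < degu ux u (Polynomial.X ^ e * a r s) s) ∧
    -- (B4)
    (∀ j, 1 ≤ j → j < s → degu ux u (b j) j ≤ degu ux u (Polynomial.X ^ e * a r s) s) ∧
    -- final claim, stated additively
    degLT ux u r b + degu ux u (a r r) r ≤ degLT ux u r (a r) + degu ux u (b r) r ∧
    (degLT ux u r b + degu ux u (a r r) r = degLT ux u r (a r) + degu ux u (b r) r →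
      indLT ux u r b < indLT ux u r (a r)) := by
  have hs_mem : s ∈ Set.Icc 1 r := ⟨hs, hsr.le⟩
  have hr_mem : r ∈ Set.Icc 1 r := ⟨hs.trans hsr.le, le_rfl⟩
  have hswap := add_swap_lt_of_sum_swap_lt (w := fun i j => degu ux u (a i j) j)
    (Finset.mem_Icc.2 hs_mem) (Finset.mem_Icc.2 hr_mem) hsr.ne
    (hE3 (Equiv.swap s r) (Equiv.swap_bijOn_self (iff_of_true hs_mem hr_mem))
      ⟨s, hs_mem, by rw [Equiv.swap_apply_left]; exact hsr.ne'⟩)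
  subst hc
  obtain rfl : b = cancelLead e s (a r) (a s) := funext hb
  obtain ⟨hB1, hle, hlt, hfinal⟩ := stmt_17_general hux
    (isLeadingIndex_of_lt_of_le hs hsr.le hE2 hE2') (isLeadingIndex_of_lt_of_le hs hsr.le hE1 hE1')
    hars hswap (e := e) (by omega)
  exact ⟨hB1, hlt s le_rfl hsr.le, fun j hsj hjr => hlt j hsj.le hjr.le,
    fun j hj hjs => hle j hj (hjs.le.trans hsr.le), hfinal⟩
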